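/- arXiv:1701.06644 — 2 statements merged into one kernel-verified Lean document; each statement's English description precedes it below -/
import Mathlib

section
/- Let M = (S, A, δ) be a finite fuzzy transition system, let the discount factor be γ = 1, and let d_f^1 = sup_{n∈ℕ} Δ^n(⊥) be the least fixpoint of Δ. Then for all s, t ∈ S, the value d_f^1(s,t) belongs to Θ_M. -/
/-!
Every iterate `Δⁿ(⊥)` already takes its values in `Θ_M`; since `Θ_M` is finite, so does the
pointwise supremum of the iterates.

All operations building `Δ(d)` from `d`, except the infimum in the lifted distance, are finite
maxima and minima, which select one of their arguments. For the infimum, let `floorT T y` be the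
largest element of a finite set `T ∋ 0` of nonnegative reals not exceeding `y`. This map is
monotone, so it commutes with finite maxima, and it fixes `T`. Applying it entrywise to a feasible
`x` therefore gives a feasible matrix with entries in `T`, whose objective value is no larger and
lies in `T` (`exists_rounding`). Hence the infimum is the minimum of a finite subset of `T`
(`liftDist_mem`).
-/

open Finset
open scoped Classical

noncomputable section

variable {S A : Type*} [Fintype S] [Nonempty S] [Fintype A] [Nonempty A]

/-- The maximum value of a fuzzy subset `μ : S → ℝ` over the finite nonempty set `S`. -/
def maxS (μ : S → ℝ) : ℝ := Finset.univ.sup' Finset.univ_nonempty μ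

/-- Feasibility for the mathematical program defining the lifted distance. -/
def Feasible (μ η : S → ℝ) (x : S → S → ℝ) : Prop :=
  (∀ u v, 0 ≤ x u v) ∧ (∀ u, maxS (x u) = μ u) ∧ (∀ v, maxS (fun u => x u v) = η v)

/-- The lifted distance `d̂(μ,η)` induced by `d` on fuzzy subsets. -/
def liftDist (d : S → S → ℝ) (μ η : S → ℝ) : ℝ :=
  if maxS μ = maxS η then
    sInf {r : ℝ | ∃ x : S → S → ℝ, Feasible μ η x ∧
      r = Finset.univ.sup' Finset.univ_nonempty
            (fun p : S × S => min (d p.1 p.2) (x p.1 p.2))}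
  else 1

/-- Distance from a fuzzy subset to a finite set of fuzzy subsets. -/
def liftDistSet (d : S → S → ℝ) (μ : S → ℝ) (W : Finset (S → ℝ)) : ℝ :=
  if h : W.Nonempty then W.inf' h (liftDist d μ) else 1

/-- Max of `f` over a finite set of fuzzy subsets, `0` if the set is empty. -/
def sup0 (Y : Finset (S → ℝ)) (f : (S → ℝ) → ℝ) : ℝ :=
  if h : Y.Nonempty then Y.sup' h f else 0

/-- Hausdorff distance induced by `d` on finite sets of fuzzy subsets. -/
def Hdist (d : S → S → ℝ) (Y Z : Finset (S → ℝ)) : ℝ :=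
  if Y = ∅ ∧ Z = ∅ then 0
  else max (sup0 Y fun μ => liftDistSet d μ Z) (sup0 Z fun ν => liftDistSet d ν Y)

/-- The functional `Δ` with discount factor `γ` on a fuzzy transition system `δ`. -/
def Delta (γ : ℝ) (δ : S → A → Finset (S → ℝ)) (d : S → S → ℝ) : S → S → ℝ :=
  fun s t => γ * Finset.univ.sup' Finset.univ_nonempty (fun a => Hdist d (δ s a) (δ t a))

/-- All fuzzy subsets occurring in the transition function take values in `[0,1]`. -/
def FTSvalid (δ : S → A → Finset (S → ℝ)) : Prop :=
  ∀ s a, ∀ μ ∈ δ s a, ∀ u, μ u ∈ Set.Icc (0:ℝ) 1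

/-- The set `Θ_M` of membership values occurring in the system, together with `0` and `1`. -/
def ThetaM (δ : S → A → Finset (S → ℝ)) : Set ℝ :=
  {r : ℝ | ∃ s a μ, μ ∈ δ s a ∧ ∃ u, μ u = r} ∪ {0, 1}

/-- The supremum norm of the difference of two distance functions. -/
def dnorm (d d' : S → S → ℝ) : ℝ :=
  Finset.univ.sup' Finset.univ_nonempty (fun p : S × S => |d p.1 p.2 - d' p.1 p.2|)

end

section Rounding

/-- For `y ≥ 0`, the largest element of `T` that is at most `y` (when `0 ∈ T` and `T` consists of
nonnegative reals). Elements exceeding `y` are replaced by `0`, which makes the function total and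
monotone on all of `ℝ`. -/
noncomputable def floorT (T : Finset ℝ) (hT : T.Nonempty) (y : ℝ) : ℝ :=
  T.sup' hT fun θ => if θ ≤ y then θ else 0

variable {T : Finset ℝ} {hT : T.Nonempty}

lemma sup'_mem_of_forall {ι : Type*} {s : Finset ι} (hs : s.Nonempty) {f : ι → ℝ}
    (h : ∀ i ∈ s, f i ∈ T) : s.sup' hs f ∈ T := by
  obtain ⟨i, hi, e⟩ := Finset.exists_mem_eq_sup' hs f
  rw [e]; exact h i hi

lemma inf'_mem_of_forall {ι : Type*} {s : Finset ι} (hs : s.Nonempty) {f : ι → ℝ}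
    (h : ∀ i ∈ s, f i ∈ T) : s.inf' hs f ∈ T := by
  obtain ⟨i, hi, e⟩ := Finset.exists_mem_eq_inf' hs f
  rw [e]; exact h i hi

lemma floorT_mem (h0 : (0 : ℝ) ∈ T) (y : ℝ) : floorT T hT y ∈ T := by
  refine sup'_mem_of_forall hT fun θ hθ => ?_
  split_ifs <;> assumption

lemma floorT_le {y : ℝ} (hy : 0 ≤ y) : floorT T hT y ≤ y := by
  refine Finset.sup'_le _ _ fun θ _ => ?_
  split_ifs <;> assumption

lemma floorT_mono (hnn : ∀ θ ∈ T, 0 ≤ θ) : Monotone (floorT T hT) := by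
  intro y z hyz
  refine Finset.sup'_mono_fun fun θ hθ => ?_
  have := hnn θ hθ
  split_ifs <;> linarith

lemma floorT_eq (hnn : ∀ θ ∈ T, 0 ≤ θ) {y : ℝ} (hy : y ∈ T) : floorT T hT y = y := by
  refine le_antisymm (floorT_le (hnn y hy)) ?_
  have := Finset.le_sup' (fun θ => if θ ≤ y then θ else 0) hy
  rwa [if_pos le_rfl] at this

end Rounding

section Lifting

variable {S : Type*} [Fintype S] [Nonempty S] {T : Finset ℝ}

lemma maxS_floorT (hT : T.Nonempty) (hnn : ∀ θ ∈ T, 0 ≤ θ) (f : S → ℝ) :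
    maxS (fun u => floorT T hT (f u)) = floorT T hT (maxS f) :=
  (Finset.apply_sup'_eq_sup'_comp Finset.univ_nonempty (floorT T hT)
    fun a b => (floorT_mono hnn).map_sup a b).symm

/-- Rounding a feasible matrix down to `T` keeps it feasible and does not increase the objective,
which then lies in `T`. -/
lemma exists_rounding (h0 : (0 : ℝ) ∈ T) (hnn : ∀ θ ∈ T, 0 ≤ θ) {d : S → S → ℝ}
    (hd : ∀ s t, d s t ∈ T) {μ η : S → ℝ} (hμ : ∀ u, μ u ∈ T) (hη : ∀ u, η u ∈ T)
    {x : S → S → ℝ} (hx : Feasible μ η x) :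
    ∃ y : S → S → ℝ, Feasible μ η y ∧
      Finset.univ.sup' Finset.univ_nonempty
        (fun p : S × S => min (d p.1 p.2) (y p.1 p.2)) ∈ T ∧
      Finset.univ.sup' Finset.univ_nonempty (fun p : S × S => min (d p.1 p.2) (y p.1 p.2)) ≤
        Finset.univ.sup' Finset.univ_nonempty
          (fun p : S × S => min (d p.1 p.2) (x p.1 p.2)) := by
  have hT : T.Nonempty := ⟨0, h0⟩
  obtain ⟨hx0, hrow, hcol⟩ := hx
  refine ⟨fun u v => floorT T hT (x u v), ⟨fun u v => hnn _ (floorT_mem h0 _), fun u => ?_,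
    fun v => ?_⟩, ?_, ?_⟩
  · rw [maxS_floorT hT hnn, hrow, floorT_eq hnn (hμ u)]
  · rw [maxS_floorT hT hnn (fun u => x u v), hcol, floorT_eq hnn (hη v)]
  · refine sup'_mem_of_forall _ fun p _ => ?_
    rcases min_choice (d p.1 p.2) (floorT T hT (x p.1 p.2)) with h | h <;> rw [h]
    · exact hd _ _
    · exact floorT_mem h0 _
  · exact Finset.sup'_mono_fun fun p _ => min_le_min le_rfl (floorT_le (hx0 _ _))

lemma liftDist_mem (h0 : (0 : ℝ) ∈ T) (h1 : (1 : ℝ) ∈ T) (hnn : ∀ θ ∈ T, 0 ≤ θ)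
    {d : S → S → ℝ} (hd : ∀ s t, d s t ∈ T) {μ η : S → ℝ} (hμ : ∀ u, μ u ∈ T)
    (hη : ∀ u, η u ∈ T) : liftDist d μ η ∈ T := by
  unfold liftDist
  split_ifs
  swap
  · exact h1
  set R := {r : ℝ | ∃ x : S → S → ℝ, Feasible μ η x ∧
      r = Finset.univ.sup' Finset.univ_nonempty
            (fun p : S × S => min (d p.1 p.2) (x p.1 p.2))} with hR
  have key : ∀ r ∈ R, ∃ r' ∈ R ∩ ↑T, r' ≤ r := by
    rintro r ⟨x, hx, rfl⟩
    obtain ⟨y, hy, hyT, hle⟩ := exists_rounding h0 hnn hd hμ hη hx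
    exact ⟨_, ⟨⟨y, hy, rfl⟩, hyT⟩, hle⟩
  rcases R.eq_empty_or_nonempty with hE | ⟨r, hr⟩
  -- `sInf ∅ = 0` in `ℝ`, so no feasible matrix has to be exhibited.
  · rw [hE, Real.sInf_empty]; exact h0
  · obtain ⟨r', hr', -⟩ := key r hr
    have hfin : (R ∩ (↑T : Set ℝ)).Finite := T.finite_toSet.subset Set.inter_subset_right
    obtain ⟨m, hm, hmin⟩ := Set.exists_min_image _ id hfin ⟨r', hr'⟩
    have hleast : IsLeast R m := by
      refine ⟨hm.1, fun q hq => ?_⟩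
      obtain ⟨q', hq', hle⟩ := key q hq
      exact (hmin q' hq').trans hle
    rw [hleast.csInf_eq]
    exact hm.2

lemma sup0_liftDistSet_mem (h0 : (0 : ℝ) ∈ T) (h1 : (1 : ℝ) ∈ T) (hnn : ∀ θ ∈ T, 0 ≤ θ)
    {d : S → S → ℝ} (hd : ∀ s t, d s t ∈ T) {Y Z : Finset (S → ℝ)}
    (hY : ∀ μ ∈ Y, ∀ u, μ u ∈ T) (hZ : ∀ μ ∈ Z, ∀ u, μ u ∈ T) :
    sup0 Y (fun μ => liftDistSet d μ Z) ∈ T := by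
  unfold sup0
  split_ifs with h
  · refine sup'_mem_of_forall h fun μ hμ => ?_
    unfold liftDistSet
    split_ifs with h'
    · exact inf'_mem_of_forall h' fun ν hν => liftDist_mem h0 h1 hnn hd (hY μ hμ) (hZ ν hν)
    · exact h1
  · exact h0

lemma Hdist_mem (h0 : (0 : ℝ) ∈ T) (h1 : (1 : ℝ) ∈ T) (hnn : ∀ θ ∈ T, 0 ≤ θ)
    {d : S → S → ℝ} (hd : ∀ s t, d s t ∈ T) {Y Z : Finset (S → ℝ)}
    (hY : ∀ μ ∈ Y, ∀ u, μ u ∈ T) (hZ : ∀ μ ∈ Z, ∀ u, μ u ∈ T) : Hdist d Y Z ∈ T := by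
  unfold Hdist
  split_ifs
  · exact h0
  · rcases max_choice (sup0 Y fun μ => liftDistSet d μ Z) (sup0 Z fun ν => liftDistSet d ν Y)
      with h | h <;> rw [h]
    · exact sup0_liftDistSet_mem h0 h1 hnn hd hY hZ
    · exact sup0_liftDistSet_mem h0 h1 hnn hd hZ hY

end Lifting

lemma ThetaM_finite {S A : Type*} [Fintype S] [Fintype A] (δ : S → A → Finset (S → ℝ)) :
    (ThetaM δ).Finite := by
  refine Set.Finite.union ?_ (by simp)
  have : {r : ℝ | ∃ s a μ, μ ∈ δ s a ∧ ∃ u, μ u = r} =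
      ⋃ s, ⋃ a, ⋃ μ ∈ δ s a, Set.range μ := by
    ext r; simp
  rw [this]
  exact Set.finite_iUnion fun s => Set.finite_iUnion fun a =>
    (δ s a).finite_toSet.biUnion fun μ _ => Set.finite_range μ

/-- for `γ = 1`, each entry of the least fixpoint
`d_f^1 = sup_n Δ^n(⊥)` belongs to `Θ_M`. -/
theorem fixpoint_mem_Theta {S A : Type*} [Fintype S] [Nonempty S] [Fintype A] [Nonempty A]
    (δ : S → A → Finset (S → ℝ)) (hδ : FTSvalid δ)
    (df : S → S → ℝ)
    (hdf : ∀ s t, df s t = ⨆ n : ℕ, (Delta 1 δ)^[n] (fun _ _ => 0) s t) :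
    ∀ s t, df s t ∈ ThetaM δ := by
  have hfin := ThetaM_finite δ
  obtain ⟨T, hT⟩ : ∃ T : Finset ℝ, ∀ r, r ∈ T ↔ r ∈ ThetaM δ :=
    ⟨hfin.toFinset, fun r => hfin.mem_toFinset⟩
  have h0 : (0 : ℝ) ∈ T := (hT 0).2 (Or.inr (by simp))
  have h1 : (1 : ℝ) ∈ T := (hT 1).2 (Or.inr (by simp))
  have hnn : ∀ θ ∈ T, 0 ≤ θ := by
    intro θ hθ
    rcases (hT θ).1 hθ with ⟨s, a, μ, hμ, u, rfl⟩ | rfl | rfl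
    · exact (hδ s a μ hμ u).1
    · exact le_rfl
    · exact zero_le_one
  have hmem : ∀ s a, ∀ μ ∈ δ s a, ∀ u, μ u ∈ T :=
    fun s a μ hμ u => (hT _).2 (Or.inl ⟨s, a, μ, hμ, u, rfl⟩)
  have hiter : ∀ n : ℕ, ∀ s t, (Delta 1 δ)^[n] (fun _ _ => 0) s t ∈ T := by
    intro n
    induction n with
    | zero => intro s t; exact h0
    | succ n ih =>
      intro s t
      rw [Function.iterate_succ_apply']
      simp only [Delta, one_mul]
      exact sup'_mem_of_forall _ fun a _ => Hdist_mem h0 h1 hnn ih (hmem s a) (hmem t a)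
  intro s t
  rw [hdf, ← hT]
  have hsub : Set.range (fun n : ℕ => (Delta 1 δ)^[n] (fun _ _ => 0) s t) ⊆ (↑T : Set ℝ) := by
    rintro _ ⟨n, rfl⟩
    exact hiter n s t
  exact hsub ((Set.range_nonempty _).csSup_mem (T.finite_toSet.subset hsub))
end

section
/- Let M = (S, A, δ) be a finite fuzzy transition system and γ ∈ (0,1] a discount factor. For all functions d, d' : S × S → [0,1], it holds that ‖Δ(d) − Δ(d')‖ ≤ γ · ‖d − d'‖; in particular, for γ < 1 the functional Δ is a contraction mapping in the supremum norm. -/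
/-!
Put `c = ‖d − d'‖`, so that `d ≤ d' + c` and `d' ≤ d + c` pointwise. Each operation from which `Δ`
is built (`min` with a fixed value, maximum and minimum over a finite set, infimum over a set of
couplings that does not depend on `d`) is monotone and turns a shift by `c ≥ 0` into a shift by at
most `c`. Hence a one-sided bound `d ≤ d' + c` passes to the lifted distance (`liftDist_le_add`),
to the Hausdorff distance (`Hdist_le_add`) and, with the factor `γ`, to `Δ` (`Delta_le_add`).
Exchanging `d` and `d'` gives the bound on the absolute value.
-/

open Finset
open scoped Classical

/-- Enlarging `d` by at most `c` at every point enlarges the lifted distance by at most `c`: the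
feasible couplings do not depend on `d`, and `min (a + c) x ≤ min a x + c`. If no coupling is
feasible, both infima take the junk value `0` and the bound still holds. -/
lemma liftDist_le_add {S : Type*} [Fintype S] [Nonempty S] {d d' : S → S → ℝ} {c : ℝ}
    (hc : 0 ≤ c) (hd : ∀ s t, 0 ≤ d s t) (h : ∀ s t, d s t ≤ d' s t + c) (μ η : S → ℝ) :
    liftDist d μ η ≤ liftDist d' μ η + c := by
  unfold liftDist
  split_ifs with hmax
  · by_cases hx : ∃ x, Feasible μ η x
    · rw [← sub_le_iff_le_add]
      obtain ⟨x₀, hx₀⟩ := hx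
      refine le_csInf ⟨_, x₀, hx₀, rfl⟩ ?_
      rintro r ⟨x, hx, rfl⟩
      rw [sub_le_iff_le_add]
      refine le_trans (csInf_le ?_ (Set.mem_ofPred.2 ⟨x, hx, rfl⟩)) ?_
      · refine ⟨0, ?_⟩
        rintro r ⟨y, hy, rfl⟩
        obtain ⟨p⟩ : Nonempty (S × S) := inferInstance
        exact (le_min (hd p.1 p.2) (hy.1 p.1 p.2)).trans
          (Finset.le_sup' (fun p : S × S => min (d p.1 p.2) (y p.1 p.2)) (Finset.mem_univ p))
      · refine Finset.sup'_le _ _ fun p _ => ?_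
        have h1 := Finset.le_sup' (fun p : S × S => min (d' p.1 p.2) (x p.1 p.2))
          (Finset.mem_univ p)
        have h2 : min (d p.1 p.2) (x p.1 p.2) ≤ min (d' p.1 p.2) (x p.1 p.2) + c := by
          rw [← min_add_add_right]
          exact min_le_min (h _ _) (by linarith)
        exact h2.trans (add_le_add_left h1 c)
    · have hempty (e : S → S → ℝ) : {r : ℝ | ∃ x : S → S → ℝ, Feasible μ η x ∧
          r = Finset.univ.sup' Finset.univ_nonempty
            (fun p : S × S => min (e p.1 p.2) (x p.1 p.2))} = ∅ :=
        Set.eq_empty_of_forall_notMem fun r ⟨x, hf, _⟩ => hx ⟨x, hf⟩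
      simp [hempty, hc]
  · linarith

lemma liftDistSet_le_add {S : Type*} [Fintype S] [Nonempty S] {d d' : S → S → ℝ} {c : ℝ}
    (hc : 0 ≤ c) (hd : ∀ s t, 0 ≤ d s t) (h : ∀ s t, d s t ≤ d' s t + c)
    (μ : S → ℝ) (W : Finset (S → ℝ)) :
    liftDistSet d μ W ≤ liftDistSet d' μ W + c := by
  unfold liftDistSet
  split_ifs with hW
  · rw [← sub_le_iff_le_add]
    refine Finset.le_inf' _ _ fun ν hν => ?_
    rw [sub_le_iff_le_add]
    exact (Finset.inf'_le _ hν).trans (liftDist_le_add hc hd h μ ν)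
  · linarith

lemma sup0_le_add {S : Type*} {f g : (S → ℝ) → ℝ} {c : ℝ}
    (hc : 0 ≤ c) (h : ∀ μ, f μ ≤ g μ + c) (Y : Finset (S → ℝ)) :
    sup0 Y f ≤ sup0 Y g + c := by
  unfold sup0
  split_ifs with hY
  · refine Finset.sup'_le _ _ fun μ hμ => (h μ).trans ?_
    have := Finset.le_sup' g hμ
    linarith
  · linarith

lemma Hdist_le_add {S : Type*} [Fintype S] [Nonempty S] {d d' : S → S → ℝ} {c : ℝ}
    (hc : 0 ≤ c) (hd : ∀ s t, 0 ≤ d s t) (h : ∀ s t, d s t ≤ d' s t + c)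
    (Y Z : Finset (S → ℝ)) :
    Hdist d Y Z ≤ Hdist d' Y Z + c := by
  unfold Hdist
  split_ifs
  · linarith
  · rw [← max_add_add_right]
    exact max_le_max (sup0_le_add hc (fun μ => liftDistSet_le_add hc hd h μ Z) Y)
      (sup0_le_add hc (fun ν => liftDistSet_le_add hc hd h ν Y) Z)

lemma Delta_le_add {S A : Type*} [Fintype S] [Nonempty S] [Fintype A] [Nonempty A]
    {γ : ℝ} (hγ : 0 ≤ γ) (δ : S → A → Finset (S → ℝ)) {d d' : S → S → ℝ} {c : ℝ}
    (hc : 0 ≤ c) (hd : ∀ s t, 0 ≤ d s t) (h : ∀ s t, d s t ≤ d' s t + c) (s t : S) :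
    Delta γ δ d s t ≤ Delta γ δ d' s t + γ * c := by
  unfold Delta
  rw [← mul_add]
  refine mul_le_mul_of_nonneg_left (Finset.sup'_le _ _ fun a _ => ?_) hγ
  refine (Hdist_le_add hc hd h _ _).trans ?_
  have := Finset.le_sup' (fun a => Hdist d' (δ s a) (δ t a)) (Finset.mem_univ a)
  exact add_le_add_left this c

lemma abs_sub_le_dnorm {S : Type*} [Fintype S] [Nonempty S] (d d' : S → S → ℝ) (s t : S) :
    |d s t - d' s t| ≤ dnorm d d' :=
  Finset.le_sup' (fun p : S × S => |d p.1 p.2 - d' p.1 p.2|) (Finset.mem_univ (s, t))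

/-- `‖Δ(d) − Δ(d')‖ ≤ γ · ‖d − d'‖`; in particular, for `γ < 1` the
functional `Δ` is a contraction mapping in the supremum norm. -/
theorem Delta_contraction {S A : Type*} [Fintype S] [Nonempty S] [Fintype A] [Nonempty A]
    (γ : ℝ) (hγ : γ ∈ Set.Ioc (0:ℝ) 1)
    (δ : S → A → Finset (S → ℝ)) (hδ : FTSvalid δ)
    (d d' : S → S → ℝ)
    (hd : ∀ s t, d s t ∈ Set.Icc (0:ℝ) 1) (hd' : ∀ s t, d' s t ∈ Set.Icc (0:ℝ) 1) :
    dnorm (Delta γ δ d) (Delta γ δ d') ≤ γ * dnorm d d' := by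
  have hc : 0 ≤ dnorm d d' := by
    obtain ⟨s⟩ : Nonempty S := inferInstance
    exact (abs_nonneg _).trans (abs_sub_le_dnorm d d' s s)
  refine Finset.sup'_le _ _ fun p _ => abs_sub_le_iff.2 ⟨?_, ?_⟩
  · have := Delta_le_add hγ.1.le δ hc (fun s t => (hd s t).1) (d' := d')
      (fun s t => by linarith [(abs_le.1 (abs_sub_le_dnorm d d' s t)).2]) p.1 p.2
    linarith
  · have := Delta_le_add hγ.1.le δ hc (fun s t => (hd' s t).1) (d' := d)
      (fun s t => by linarith [(abs_le.1 (abs_sub_le_dnorm d d' s t)).1]) p.1 p.2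
    linarith
end
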